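/- Let c₀, c₁, c₂, d ∈ EuclideanSpace ℝ (Fin 3) and r > 0. Suppose each cᵢ has third coordinate 1/2, the three points c₀, c₁, c₂ are pairwise at distance 1 (so the three radius-1/2 balls centered at them are pairwise externally tangent and all tangent to the plane x 2 = 0), the point d has third coordinate r, and dist(d, cᵢ) = r + 1/2 for each i = 0, 1, 2 (so the radius-r ball centered at d is tangent to the plane and externally tangent to all three). Then r = 1/6. -/

import Mathlib

/-!
Orthogonal projection along the unit normal `e` of a hyperplane sends the centres of two tangent
balls of radii `a`, `b` resting on that hyperplane to points at squared distance
`(a + b)² - (a - b)² = 4ab`. Hence the feet of the `n` balls of radius `s` form a regular simplex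
of edge `2s` in a space of dimension `n - 1`, and the foot of the extra ball is equidistant from its
vertices, at squared distance `4rs`. A nontrivial linear relation among the vectors from the
circumcentre to the vertices must have equal coefficients, so the circumcentre is the barycentre;
this determines the circumradius, hence `r`.
-/

open Module
open scoped InnerProductSpace

section

variable {ι V : Type*} [Fintype ι] [NormedAddCommGroup V] [InnerProductSpace ℝ V]

theorem inner_sum_smul_of_pairwise_inner_eq {v : ι → V} {a b : ℝ}
    (hself : ∀ i, ⟪v i, v i⟫_ℝ = a) (hpair : Pairwise fun i j ↦ ⟪v i, v j⟫_ℝ = b)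
    (w : ι → ℝ) (j : ι) :
    ⟪∑ i, w i • v i, v j⟫_ℝ = (∑ i, w i) * b + w j * (a - b) := by
  classical
  have hinner (i : ι) : ⟪v i, v j⟫_ℝ = b + if i = j then a - b else 0 := by
    split_ifs with hij
    · rw [hij, hself, add_sub_cancel]
    · rw [hpair hij, add_zero]
  simp [sum_inner, real_inner_smul_left, hinner, mul_add, Finset.sum_add_distrib, Finset.sum_mul]

theorem sum_eq_zero_of_pairwise_inner_eq [FiniteDimensional ℝ V] {v : ι → V} {a b : ℝ}
    (hcard : finrank ℝ V < Fintype.card ι) (hab : a ≠ b)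
    (hself : ∀ i, ⟪v i, v i⟫_ℝ = a) (hpair : Pairwise fun i j ↦ ⟪v i, v j⟫_ℝ = b) :
    ∑ i, v i = 0 := by
  have hdep : ¬LinearIndependent ℝ v := fun h ↦ hcard.not_ge h.fintype_card_le_finrank
  obtain ⟨w, hw, k, hk⟩ := Fintype.not_linearIndependent_iff.mp hdep
  have hrel (j : ι) : (∑ i, w i) * b + w j * (a - b) = 0 := by
    rw [← inner_sum_smul_of_pairwise_inner_eq hself hpair, hw, inner_zero_left]
  have hconst (j : ι) : w j = w k :=
    mul_right_cancel₀ (sub_ne_zero.mpr hab) (by linarith [hrel j, hrel k])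
  have hsmul : w k • ∑ i, v i = 0 := by
    simpa only [hconst, ← Finset.smul_sum] using hw
  exact (smul_eq_zero.mp hsmul).resolve_left hk

theorem card_mul_add_sub_eq_zero_of_sum_eq_zero [Nonempty ι] {v : ι → V} {a b : ℝ}
    (hself : ∀ i, ⟪v i, v i⟫_ℝ = a) (hpair : Pairwise fun i j ↦ ⟪v i, v j⟫_ℝ = b)
    (hsum : ∑ i, v i = 0) : Fintype.card ι * b + (a - b) = 0 := by
  obtain ⟨k⟩ := ‹Nonempty ι›
  simpa [hsum] using (inner_sum_smul_of_pairwise_inner_eq hself hpair (fun _ ↦ 1) k).symm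

theorem two_mul_card_mul_eq_of_dist_sq_eq [FiniteDimensional ℝ V] {p : ι → V} {q : V}
    {a b : ℝ} (hcard : finrank ℝ V < Fintype.card ι) (hb : b ≠ 0)
    (hcenter : ∀ i, dist q (p i) ^ 2 = a) (hpair : Pairwise fun i j ↦ dist (p i) (p j) ^ 2 = b) :
    2 * Fintype.card ι * a = (Fintype.card ι - 1) * b := by
  have : Nonempty ι := Fintype.card_pos_iff.mp (Nat.zero_lt_of_lt hcard)
  have hself (i : ι) : ⟪q - p i, q - p i⟫_ℝ = a := by
    rw [real_inner_self_eq_norm_sq, ← dist_eq_norm, hcenter]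
  have hinner : Pairwise fun i j ↦ ⟪q - p i, q - p j⟫_ℝ = a - b / 2 := fun i j hij ↦ by
    have hsub := norm_sub_sq_real (q - p i) (q - p j)
    rw [sub_sub_sub_cancel_left, ← dist_eq_norm, ← dist_eq_norm, ← dist_eq_norm, hcenter, hcenter,
      hpair hij.symm] at hsub
    linarith
  have hne : a ≠ a - b / 2 := fun h ↦ hb (by linarith)
  have hsum := sum_eq_zero_of_pairwise_inner_eq hcard hne hself hinner
  linarith [card_mul_add_sub_eq_zero_of_sum_eq_zero hself hinner hsum]

end

section

variable {V : Type*} [NormedAddCommGroup V] [InnerProductSpace ℝ V] {e : V}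

theorem dist_sq_eq_inner_sub_sq_add_dist_orthogonalProjectionOnto_sq (he : ‖e‖ = 1) (x y : V) :
    dist x y ^ 2 = (⟪e, x⟫_ℝ - ⟪e, y⟫_ℝ) ^ 2 +
      dist ((ℝ ∙ e)ᗮ.orthogonalProjectionOnto x) ((ℝ ∙ e)ᗮ.orthogonalProjectionOnto y) ^ 2 := by
  have hnormal : ‖(ℝ ∙ e).orthogonalProjectionOnto (x - y)‖ = |⟪e, x⟫_ℝ - ⟪e, y⟫_ℝ| := by
    rw [← Submodule.norm_coe, Submodule.coe_orthogonalProjectionOnto_apply,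
      Submodule.starProjection_unit_singleton ℝ he, norm_smul, he, mul_one, inner_sub_right,
      Real.norm_eq_abs]
  rw [dist_eq_norm, dist_eq_norm, ← map_sub,
    Submodule.norm_sq_eq_add_norm_sq_projection (x - y) (ℝ ∙ e), hnormal, sq_abs]

theorem dist_orthogonalProjectionOnto_sq_of_dist_eq_add (he : ‖e‖ = 1) {x y : V}
    (h : dist x y = ⟪e, x⟫_ℝ + ⟪e, y⟫_ℝ) :
    dist ((ℝ ∙ e)ᗮ.orthogonalProjectionOnto x) ((ℝ ∙ e)ᗮ.orthogonalProjectionOnto y) ^ 2 =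
      4 * ⟪e, x⟫_ℝ * ⟪e, y⟫_ℝ := by
  have hsq := dist_sq_eq_inner_sub_sq_add_dist_orthogonalProjectionOnto_sq he x y
  rw [h] at hsq
  linarith

theorem radius_of_fourth_tangent_ball_general {ι : Type*} [Fintype ι] [FiniteDimensional ℝ V]
    (he : ‖e‖ = 1) (hcard : Fintype.card ι = finrank ℝ V) {c : ι → V} {d : V} {r s : ℝ}
    (hs : s ≠ 0) (hc : ∀ i, ⟪e, c i⟫_ℝ = s) (hpair : Pairwise fun i j ↦ dist (c i) (c j) = 2 * s)
    (hd : ⟪e, d⟫_ℝ = r) (htan : ∀ i, dist d (c i) = r + s) :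
    r = (Fintype.card ι - 1) / (2 * Fintype.card ι) * s := by
  let foot := (ℝ ∙ e)ᗮ.orthogonalProjectionOnto
  have hne : e ≠ 0 := norm_ne_zero_iff.mp (he ▸ one_ne_zero)
  have hdim : finrank ℝ (ℝ ∙ e)ᗮ < Fintype.card ι := by
    have := (ℝ ∙ e).finrank_add_finrank_orthogonal
    rw [finrank_span_singleton hne] at this
    lia
  have hcenter (i : ι) : dist (foot d) (foot (c i)) ^ 2 = 4 * r * s := by
    rw [dist_orthogonalProjectionOnto_sq_of_dist_eq_add he (by rw [htan, hd, hc]), hd, hc]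
  have hedge : Pairwise fun i j ↦ dist (foot (c i)) (foot (c j)) ^ 2 = 4 * s * s := by
    intro i j hij
    rw [dist_orthogonalProjectionOnto_sq_of_dist_eq_add he (by rw [hpair hij, hc, hc, two_mul]),
      hc, hc]
  have hradius := two_mul_card_mul_eq_of_dist_sq_eq hdim (by positivity) hcenter hedge
  have hcard_ne : (Fintype.card ι : ℝ) ≠ 0 := by exact_mod_cast (Nat.zero_lt_of_lt hdim).ne'
  have hcancel : 2 * Fintype.card ι * r = (Fintype.card ι - 1) * s :=
    mul_right_cancel₀ (mul_ne_zero four_ne_zero hs) (by linarith)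
  field_simp
  linarith

end

/-- The ball tangent to the plane {x : x 2 = 0} and externally tangent to three mutually
tangent radius-1/2 balls tangent to that plane has radius 1/6. -/
theorem radius_of_fourth_tangent_ball (c : Fin 3 → EuclideanSpace ℝ (Fin 3))
    (d : EuclideanSpace ℝ (Fin 3)) (r : ℝ) (hr : 0 < r)
    (hc : ∀ i, c i 2 = 1 / 2)
    (hpair : ∀ i j, i ≠ j → dist (c i) (c j) = 1)
    (hd : d 2 = r)
    (htan : ∀ i, dist d (c i) = r + 1 / 2) :
    r = 1 / 6 := by
  have h := radius_of_fourth_tangent_ball_general (e := EuclideanSpace.single (2 : Fin 3) (1 : ℝ))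
    (by simp) (by simp) (one_div_ne_zero two_ne_zero)
    (by simpa [EuclideanSpace.inner_single_left] using hc)
    (fun i j hij ↦ by simpa using hpair i j hij)
    (by simpa [EuclideanSpace.inner_single_left] using hd) htan
  norm_num [h]
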